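/- For every real number q with 0 < q < 1, the integral from 0 to q of (E(t)^5 / E(t^5)) · r(t)^5 · (1/t) dt equals r(q)^5. Moreover, with α = (1+√5)/2, one has r(e^{−2π/√5})^5 = √(α^{10}+1) − α^5. -/

import Mathlib

open Real

/-- Euler's product `E(q) = ∏_{j=1}^∞ (1 - q^j)`. -/
noncomputable def eulerE (q : ℝ) : ℝ := ∏' j : ℕ, (1 - q ^ (j + 1))

/-- The Rogers–Ramanujan infinite product
`r(q) = q^{1/5} ∏_{j=1}^∞ (1-q^{5j-4})(1-q^{5j-1}) / ((1-q^{5j-3})(1-q^{5j-2}))`. -/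
noncomputable def rrProd (q : ℝ) : ℝ :=
  q ^ ((1 : ℝ) / 5) *
    ∏' j : ℕ, ((1 - q ^ (5 * j + 1)) * (1 - q ^ (5 * j + 4))) /
      ((1 - q ^ (5 * j + 2)) * (1 - q ^ (5 * j + 3)))

/-!
The Jacobi triple product writes the Rogers–Ramanujan product as `r = θ₃ / θ₁`, a quotient of two
theta series of level five. Under `τ ↦ -1 / τ` the pair `(θ₁, θ₃)` is multiplied by a power of `τ`
and by a real reflection, so two expressions in it are modular for the full modular group up to a
power of `η`: Klein's icosahedral form of degree `12`, which is invariant under that reflection, and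
the Wronskian. As there are no nonconstant modular functions without poles, they equal `η¹²` and,
up to a constant factor, `η⁶`. The Wronskian identity is the formula for the derivative of `r⁵`; the
form identity reads `1 / r⁵ - 11 - r⁵ = E(q)⁶ / (q E(q⁵)⁶)`. At `τ = i / √5` one has
`-1 / τ = 5 τ`, so the inversion formula of `η` evaluates the right-hand side as `5 √5`, and `r⁵` is
the positive root of a quadratic equation.
-/

section qPochhammer

open Filter Topology Finset

/-- The `q`-Pochhammer symbol `(x; p)_n`. -/
def finQPochhammer {R : Type*} [CommRing R] (x p : R) (n : ℕ) : R :=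
  ∏ j ∈ range n, (1 - x * p ^ j)

/-- The infinite `q`-Pochhammer symbol `(x; p)_∞`. All the products of the theorem have this form:
`E(q) = (q; q)_∞`, and `r(q)` is built from the `(q ^ r; q ^ 5)_∞` with `1 ≤ r ≤ 4`. -/
noncomputable def qPochhammer {R : Type*} [CommRing R] [TopologicalSpace R] (x p : R) : R :=
  ∏' j : ℕ, (1 - x * p ^ j)

lemma finQPochhammer_zero {R : Type*} [CommRing R] (x p : R) : finQPochhammer x p 0 = 1 :=
  prod_range_zero _

lemma finQPochhammer_succ {R : Type*} [CommRing R] (x p : R) (n : ℕ) :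
    finQPochhammer x p (n + 1) = finQPochhammer x p n * (1 - x * p ^ n) :=
  prod_range_succ _ _

section NormedField

variable {𝕜 : Type*} [NormedField 𝕜] {p : 𝕜}

lemma summable_norm_mul_pow (x : 𝕜) (hp : ‖p‖ < 1) : Summable fun j : ℕ => ‖x * p ^ j‖ := by
  simpa only [norm_mul, norm_pow] using
    (summable_geometric_of_lt_one (norm_nonneg p) hp).mul_left ‖x‖

lemma norm_pow_lt_one (hp : ‖p‖ < 1) {n : ℕ} (hn : n ≠ 0) : ‖p ^ n‖ < 1 := by
  rw [norm_pow]
  exact pow_lt_one₀ (norm_nonneg p) hp hn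

lemma mul_pow_ne_one {x : 𝕜} (hx : ‖x‖ < 1) (hp : ‖p‖ < 1) (j : ℕ) : x * p ^ j ≠ 1 := by
  intro h
  have hlt : ‖x * p ^ j‖ < 1 := by
    rw [norm_mul, norm_pow]
    exact mul_lt_one_of_nonneg_of_lt_one_left (norm_nonneg x) hx
      (pow_le_one₀ (norm_nonneg p) hp.le)
  rw [h, norm_one] at hlt
  exact lt_irrefl _ hlt

lemma finQPochhammer_ne_zero {x : 𝕜} (hx : ‖x‖ < 1) (hp : ‖p‖ < 1) (n : ℕ) :
    finQPochhammer x p n ≠ 0 :=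
  prod_ne_zero_iff.mpr fun j _ => sub_ne_zero.mpr (mul_pow_ne_one hx hp j).symm

variable [CompleteSpace 𝕜]

lemma multipliable_one_sub_mul_pow (x : 𝕜) (hp : ‖p‖ < 1) :
    Multipliable fun j : ℕ => 1 - x * p ^ j := by
  simp_rw [sub_eq_add_neg]
  exact multipliable_one_add_of_summable (by simpa only [norm_neg] using summable_norm_mul_pow x hp)

lemma tendsto_finQPochhammer (x : 𝕜) (hp : ‖p‖ < 1) :
    Tendsto (finQPochhammer x p) atTop (𝓝 (qPochhammer x p)) :=
  (multipliable_one_sub_mul_pow x hp).hasProd.tendsto_prod_nat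

lemma qPochhammer_ne_zero {x : 𝕜} (hx : ‖x‖ < 1) (hp : ‖p‖ < 1) : qPochhammer x p ≠ 0 := by
  simp_rw [qPochhammer, sub_eq_add_neg]
  refine tprod_one_add_ne_zero_of_summable (fun j => ?_)
    (by simpa only [norm_neg] using summable_norm_mul_pow x hp)
  rw [← sub_eq_add_neg]
  exact sub_ne_zero.mpr (mul_pow_ne_one hx hp j).symm

lemma qPochhammer_eq_prod_pow (m : ℕ) [NeZero m] (x : 𝕜) (hp : ‖p‖ < 1) :
    qPochhammer x p = ∏ i : Fin m, qPochhammer (x * p ^ (i : ℕ)) (p ^ m) := by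
  have hpm : ‖p ^ m‖ < 1 := norm_pow_lt_one hp (NeZero.ne m)
  have hdissect : HasProd (fun y : Fin m × ℕ => 1 - x * p ^ (y.1 : ℕ) * (p ^ m) ^ y.2)
      (qPochhammer x p) := by
    have h : HasProd _ (qPochhammer x p) :=
      (((Nat.divModEquiv m).trans (Equiv.prodComm ℕ (Fin m))).symm.hasProd_iff).mpr
        (multipliable_one_sub_mul_pow x hp).hasProd
    convert h using 2 with y
    simp only [Function.comp, Equiv.symm_trans_apply, Equiv.prodComm_symm, Equiv.prodComm_apply,
      Nat.divModEquiv_symm_apply, Prod.fst_swap, Prod.snd_swap]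
    ring
  exact (hdissect.prod_fiberwise fun i =>
    (multipliable_one_sub_mul_pow (x * p ^ (i : ℕ)) hpm).hasProd).unique (hasProd_fintype _)

end NormedField

lemma ofReal_qPochhammer (x : ℝ) {p : ℝ} (hp : ‖p‖ < 1) :
    ((qPochhammer x p : ℝ) : ℂ) = qPochhammer (x : ℂ) (p : ℂ) := by
  have h := (multipliable_one_sub_mul_pow x hp).map_tprod Complex.ofRealHom
    Complex.continuous_ofReal
  simpa [qPochhammer] using h

lemma qPochhammer_pos {x p : ℝ} (hx : ‖x‖ < 1) (hp : ‖p‖ < 1) : 0 < qPochhammer x p := by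
  refine (ge_of_tendsto' (tendsto_finQPochhammer x hp) fun n => ?_).lt_of_ne'
    (qPochhammer_ne_zero hx hp)
  refine prod_nonneg fun j _ => sub_nonneg.mpr ((le_abs_self _).trans ?_)
  rw [abs_mul, abs_pow]
  exact mul_le_one₀ hx.le (by positivity) (pow_le_one₀ (abs_nonneg p) hp.le)

lemma differentiableOn_qPochhammer_pow (r : ℕ) {m : ℕ} (hm : m ≠ 0) :
    DifferentiableOn ℂ (fun q : ℂ => qPochhammer (q ^ r) (q ^ m)) (Metric.ball 0 1) := by
  intro q hq
  rw [mem_ball_zero_iff] at hq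
  obtain ⟨ρ, hqρ, hρ⟩ := exists_between hq
  have hρ0 : 0 ≤ ρ := (norm_nonneg q).trans hqρ.le
  have hbound (j : ℕ) (z : ℂ) (hz : z ∈ Metric.ball (0 : ℂ) ρ) :
      ‖-(z ^ r * (z ^ m) ^ j)‖ ≤ ρ ^ j := by
    rw [mem_ball_zero_iff] at hz
    rw [norm_neg, ← pow_mul, ← pow_add, norm_pow]
    calc ‖z‖ ^ (r + m * j) ≤ ρ ^ (r + m * j) := by gcongr
      _ ≤ ρ ^ j := pow_le_pow_of_le_one hρ0 hρ.le (by nlinarith [Nat.pos_of_ne_zero hm])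
  have hprod := Summable.hasProdLocallyUniformlyOn_nat_one_add Metric.isOpen_ball
    (summable_geometric_of_lt_one hρ0 hρ) (.of_forall hbound) fun j => by fun_prop
  have hdiff : DifferentiableOn ℂ (fun z : ℂ => qPochhammer (z ^ r) (z ^ m)) (Metric.ball 0 ρ) := by
    simp_rw [qPochhammer, sub_eq_add_neg]
    refine hprod.differentiableOn (.of_forall fun s => ?_) Metric.isOpen_ball
    simpa only [Finset.prod_fn] using DifferentiableOn.finsetProd fun _ _ => by fun_prop
  exact (hdiff.differentiableAt
    (Metric.isOpen_ball.mem_nhds (mem_ball_zero_iff.mpr hqρ))).differentiableWithinAt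

/-- `1 / (p; p)_m` for an integer `m`, with the value `0` for `m < 0` that makes the recursion
`invQPochhammer_sub_one` hold for every `m`. -/
noncomputable def invQPochhammer {𝕜 : Type*} [Field 𝕜] (p : 𝕜) (m : ℤ) : 𝕜 :=
  if m < 0 then 0 else (finQPochhammer p p m.toNat)⁻¹

/-- The Gaussian binomial coefficient `[a + b choose a + n]` in base `p`, indexed by its distance
`n` from `a` so that it vanishes unless `-a ≤ n ≤ b`. -/
noncomputable def centeredGaussBinom {𝕜 : Type*} [Field 𝕜] (p : 𝕜) (a b : ℕ) (n : ℤ) : 𝕜 :=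
  finQPochhammer p p (a + b) * invQPochhammer p (a + n) * invQPochhammer p (b - n)

section FiniteTripleProduct

variable {𝕜 : Type*} [Field 𝕜] {p : 𝕜}

lemma invQPochhammer_sub_one (hp : ∀ n, finQPochhammer p p n ≠ 0) (m : ℤ) :
    invQPochhammer p (m - 1) = (1 - p ^ m) * invQPochhammer p m := by
  rcases lt_trichotomy m 0 with hm | rfl | hm
  · simp [invQPochhammer, hm, show m - 1 < 0 by omega]
  · simp [invQPochhammer]
  · obtain ⟨k, rfl⟩ : ∃ k : ℕ, m = (k + 1 : ℕ) := ⟨(m - 1).toNat, by omega⟩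
    have hk := hp (k + 1)
    rw [finQPochhammer_succ, mul_ne_zero_iff] at hk
    rw [show ((k + 1 : ℕ) : ℤ) - 1 = k by push_cast; ring, zpow_natCast]
    simp only [invQPochhammer, Int.toNat_natCast, show ¬ ((k : ℤ) < 0) by omega,
      show ¬ (((k + 1 : ℕ) : ℤ) < 0) by omega, if_false, finQPochhammer_succ, pow_succ' p k]
    field_simp [hk.1, hk.2]

lemma centeredGaussBinom_neg (p : 𝕜) (a b : ℕ) (n : ℤ) :
    centeredGaussBinom p a b (-n) = centeredGaussBinom p b a n := by
  simp only [centeredGaussBinom, add_comm a b, sub_neg_eq_add, ← sub_eq_add_neg]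
  ring

lemma centeredGaussBinom_succ (hp0 : p ≠ 0) (hp : ∀ n, finQPochhammer p p n ≠ 0) (a b : ℕ)
    (n : ℤ) :
    centeredGaussBinom p a (b + 1) n =
      centeredGaussBinom p a b n + p ^ (b + 1 - n) * centeredGaussBinom p a b (n - 1) := by
  have hleft : invQPochhammer p (a + (n - 1)) = (1 - p ^ (a + n)) * invQPochhammer p (a + n) := by
    rw [← invQPochhammer_sub_one hp, add_sub_assoc]
  have hright : invQPochhammer p (b - n) =
      (1 - p ^ (b + 1 - n)) * invQPochhammer p (b + 1 - n) := by
    rw [← invQPochhammer_sub_one hp]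
    congr 1
    ring
  have hpow : p * p ^ (a + b) = p ^ (a + n) * p ^ (b + 1 - n) := by
    rw [← zpow_add₀ hp0, ← pow_succ', ← zpow_natCast]
    congr 1
    push_cast
    ring
  rw [centeredGaussBinom, centeredGaussBinom, centeredGaussBinom, ← add_assoc, finQPochhammer_succ,
    hleft, hright, hpow, show (b : ℤ) - (n - 1) = b + 1 - n by ring, Nat.cast_succ]
  ring

variable [TopologicalSpace 𝕜] {Q w : 𝕜}

lemma hasSum_tripleProduct_symm {a b : ℕ} {s : 𝕜}
    (h : HasSum (fun n : ℤ => w⁻¹ ^ n * Q ^ n ^ 2 * centeredGaussBinom (Q ^ 2) b a n) s) :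
    HasSum (fun n : ℤ => w ^ n * Q ^ n ^ 2 * centeredGaussBinom (Q ^ 2) a b n) s := by
  convert (Equiv.neg ℤ).hasSum_iff.mpr h using 2 with n
  simp [centeredGaussBinom_neg]

lemma hasSum_tripleProduct_zero (Q w : 𝕜) :
    HasSum (fun n : ℤ => w ^ n * Q ^ n ^ 2 * centeredGaussBinom (Q ^ 2) 0 0 n) 1 := by
  convert hasSum_single (0 : ℤ) fun n hn => ?_
  · simp [centeredGaussBinom, invQPochhammer, finQPochhammer]
  · rcases hn.lt_or_gt with h | h <;> simp [centeredGaussBinom, invQPochhammer, h]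

variable [IsTopologicalRing 𝕜]

lemma hasSum_tripleProduct_succ (hQ : Q ≠ 0) (hw : w ≠ 0)
    (hQ2 : ∀ n, finQPochhammer (Q ^ 2) (Q ^ 2) n ≠ 0) {a b : ℕ} {s : 𝕜}
    (h : HasSum (fun n : ℤ => w ^ n * Q ^ n ^ 2 * centeredGaussBinom (Q ^ 2) a b n) s) :
    HasSum (fun n : ℤ => w ^ n * Q ^ n ^ 2 * centeredGaussBinom (Q ^ 2) a (b + 1) n)
      (s * (1 - -(w * Q) * (Q ^ 2) ^ b)) := by
  have hshift := ((Equiv.subRight (1 : ℤ)).hasSum_iff.mpr h).mul_left (w * Q * (Q ^ 2) ^ b)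
  convert h.add hshift using 1
  · funext n
    have hweight : w ^ n * Q ^ n ^ 2 * (Q ^ 2) ^ (b + 1 - n) =
        w * Q * (Q ^ 2) ^ b * (w ^ (n - 1) * Q ^ (n - 1) ^ 2) := by
      have hsq (k : ℤ) : (Q ^ 2) ^ k = Q ^ (2 * k) := by rw [zpow_mul, zpow_ofNat]
      rw [← zpow_natCast (Q ^ 2) b, hsq, hsq, mul_assoc, ← zpow_add₀ hQ, zpow_sub_one₀ hw,
        show n ^ 2 + 2 * (b + 1 - n) = 1 + 2 * b + (n - 1) ^ 2 by ring, zpow_add₀ hQ,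
        zpow_add₀ hQ, zpow_one]
      field_simp
    simp only [Function.comp, Equiv.subRight_apply]
    rw [centeredGaussBinom_succ (pow_ne_zero 2 hQ) hQ2]
    linear_combination centeredGaussBinom (Q ^ 2) a b (n - 1) * hweight
  · ring

lemma hasSum_tripleProduct (hQ : Q ≠ 0) (hw : w ≠ 0)
    (hQ2 : ∀ n, finQPochhammer (Q ^ 2) (Q ^ 2) n ≠ 0) (a b : ℕ) :
    HasSum (fun n : ℤ => w ^ n * Q ^ n ^ 2 * centeredGaussBinom (Q ^ 2) a b n)
      (finQPochhammer (-(w⁻¹ * Q)) (Q ^ 2) a * finQPochhammer (-(w * Q)) (Q ^ 2) b) := by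
  induction b with
  | zero =>
    refine hasSum_tripleProduct_symm ?_
    rw [finQPochhammer_zero (-(w * Q)), mul_one]
    induction a with
    | zero => exact hasSum_tripleProduct_zero Q w⁻¹
    | succ a ih =>
      rw [finQPochhammer_succ]
      exact hasSum_tripleProduct_succ hQ (inv_ne_zero hw) hQ2 ih
  | succ b ih =>
    rw [finQPochhammer_succ, ← mul_assoc]
    exact hasSum_tripleProduct_succ hQ hw hQ2 ih

end FiniteTripleProduct

section InfiniteTripleProduct

variable {𝕜 : Type*} [NormedField 𝕜] [CompleteSpace 𝕜] {p : 𝕜}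

lemma tendsto_invQPochhammer_atTop (hp : ‖p‖ < 1) :
    Tendsto (invQPochhammer p) atTop (𝓝 (qPochhammer p p)⁻¹) := by
  have htoNat : Tendsto Int.toNat atTop atTop :=
    tendsto_atTop.mpr fun b => by
      filter_upwards [eventually_ge_atTop (b : ℤ)] with m hm
      omega
  refine (((tendsto_finQPochhammer p hp).inv₀ (qPochhammer_ne_zero hp hp)).comp htoNat).congr' ?_
  filter_upwards [eventually_ge_atTop (0 : ℤ)] with m hm
  simp [invQPochhammer, hm.not_gt]

lemma tendsto_centeredGaussBinom (hp : ‖p‖ < 1) (n : ℤ) :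
    Tendsto (fun N : ℕ => centeredGaussBinom p N N n) atTop (𝓝 (qPochhammer p p)⁻¹) := by
  have hinv (k : ℤ) : Tendsto (fun N : ℕ => invQPochhammer p (N + k)) atTop
      (𝓝 (qPochhammer p p)⁻¹) :=
    (tendsto_invQPochhammer_atTop hp).comp
      (tendsto_atTop_add_const_right _ _ tendsto_natCast_atTop_atTop)
  have htop : Tendsto (fun N : ℕ => finQPochhammer p p (N + N)) atTop (𝓝 (qPochhammer p p)) :=
    (tendsto_finQPochhammer p hp).comp (tendsto_atTop_mono (fun N => N.le_add_left N) tendsto_id)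
  simpa [mul_inv_cancel₀ (qPochhammer_ne_zero hp hp), centeredGaussBinom, sub_eq_add_neg] using
    (htop.mul (hinv n)).mul (hinv (-n))

lemma exists_norm_centeredGaussBinom_le (hp : ‖p‖ < 1) :
    ∃ C, ∀ a b n, ‖centeredGaussBinom p a b n‖ ≤ C := by
  have hlim := tendsto_finQPochhammer p hp
  obtain ⟨C, hC⟩ := hlim.norm.bddAbove_range
  obtain ⟨D, hD⟩ := (hlim.inv₀ (qPochhammer_ne_zero hp hp)).norm.bddAbove_range
  have hC' (n : ℕ) : ‖finQPochhammer p p n‖ ≤ C := hC ⟨n, rfl⟩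
  have hD' (n : ℕ) : ‖(finQPochhammer p p n)⁻¹‖ ≤ D := hD ⟨n, rfl⟩
  have hC0 : 0 ≤ C := (norm_nonneg _).trans (hC' 0)
  have hD0 : 0 ≤ D := (norm_nonneg _).trans (hD' 0)
  have hinv (m : ℤ) : ‖invQPochhammer p m‖ ≤ D := by
    unfold invQPochhammer
    split_ifs
    · simpa using hD0
    · exact hD' _
  refine ⟨C * D * D, fun a b n => ?_⟩
  rw [centeredGaussBinom, norm_mul, norm_mul]
  gcongr
  · exact hC' _
  · exact hinv _
  · exact hinv _

theorem tsum_zpow_mul_zpow_sq {Q w : ℂ} (hQ0 : Q ≠ 0) (hQ : ‖Q‖ < 1) (hw : w ≠ 0)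
    (hsum : Summable fun n : ℤ => w ^ n * Q ^ n ^ 2) :
    ∑' n : ℤ, w ^ n * Q ^ n ^ 2 = qPochhammer (Q ^ 2) (Q ^ 2) *
      (qPochhammer (-(w⁻¹ * Q)) (Q ^ 2) * qPochhammer (-(w * Q)) (Q ^ 2)) := by
  have hQ2 : ‖Q ^ 2‖ < 1 := norm_pow_lt_one hQ two_ne_zero
  obtain ⟨C, hC⟩ := exists_norm_centeredGaussBinom_le hQ2
  have hseries := tendsto_tsum_of_dominated_convergence (hsum.norm.mul_right C)
    (fun n => (tendsto_centeredGaussBinom hQ2 n).const_mul (w ^ n * Q ^ n ^ 2))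
    (.of_forall fun N n => by rw [norm_mul]; gcongr; exact hC N N n)
  have hproduct := (tendsto_finQPochhammer (-(w⁻¹ * Q)) hQ2).mul
    (tendsto_finQPochhammer (-(w * Q)) hQ2)
  have hlimits := tendsto_nhds_unique hseries <| hproduct.congr fun N =>
    (hasSum_tripleProduct hQ0 hw (finQPochhammer_ne_zero hQ2 hQ2) N N).tsum_eq.symm
  rw [← hlimits, tsum_mul_right, mul_comm, inv_mul_cancel_right₀ (qPochhammer_ne_zero hQ2 hQ2)]

end InfiniteTripleProduct

end qPochhammer

section Theta

open Complex

local notation "𝐞(" z ")" => cexp (2 * π * I * z)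

lemma norm_exp_two_pi_mul_I_mul_lt_one {τ : ℂ} (hτ : 0 < τ.im) : ‖𝐞(τ)‖ < 1 :=
  UpperHalfPlane.norm_exp_two_pi_I_lt_one ⟨τ, hτ⟩

theorem jacobiTheta₂_eq_qPochhammer (z : ℂ) {τ : ℂ} (hτ : 0 < τ.im) :
    jacobiTheta₂ z τ = qPochhammer 𝐞(τ) 𝐞(τ) *
      (qPochhammer (-𝐞(τ / 2 - z)) 𝐞(τ) * qPochhammer (-𝐞(τ / 2 + z)) 𝐞(τ)) := by
  have hterm (n : ℤ) : jacobiTheta₂_term n z τ = 𝐞(z) ^ n * 𝐞(τ / 2) ^ n ^ 2 := by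
    rw [jacobiTheta₂_term, ← exp_int_mul, ← exp_int_mul, ← Complex.exp_add]
    congr 1
    push_cast
    ring
  have hnorm : ‖𝐞(τ / 2)‖ < 1 :=
    norm_exp_two_pi_mul_I_mul_lt_one (by rw [div_ofNat_im]; exact half_pos hτ)
  have hsquare : 𝐞(τ / 2) ^ 2 = 𝐞(τ) := by
    rw [← Complex.exp_nat_mul]
    congr 1
    push_cast
    ring
  have hsum : Summable fun n : ℤ => 𝐞(z) ^ n * 𝐞(τ / 2) ^ n ^ 2 := by
    simpa only [hterm] using (summable_jacobiTheta₂_term_iff z τ).mpr hτ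
  rw [jacobiTheta₂, tsum_congr hterm, tsum_zpow_mul_zpow_sq (exp_ne_zero _) hnorm (exp_ne_zero _)
    hsum, hsquare, ← Complex.exp_neg, ← Complex.exp_add, ← Complex.exp_add]
  congr 5 <;> ring

/-- The theta series `∑ (-1)ⁿ q ^ ((2mn + c)² / (8m))`, where `q = exp (2πiτ)`. For `m = 5` and odd
`c` these are, up to sign, the two theta functions `θ₁`, `θ₃` (and `θ₅ = 0`) whose quotient is the
Rogers–Ramanujan product. -/
noncomputable def altTheta (m : ℕ) (c : ℤ) (τ : ℂ) : ℂ :=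
  ∑' n : ℤ, (-1 : ℂ) ^ n * 𝐞((2 * m * n + c) ^ 2 / (8 * m) * τ)

lemma altTheta_neg (m : ℕ) (c : ℤ) (τ : ℂ) : altTheta m (-c) τ = altTheta m c τ := by
  unfold altTheta
  rw [← (Equiv.neg ℤ).tsum_eq]
  refine tsum_congr fun n => ?_
  rw [Equiv.neg_apply, zpow_neg, ← inv_zpow, inv_neg_one]
  congr 4
  push_cast
  ring

lemma altTheta_add_two_mul (m : ℕ) (c : ℤ) (τ : ℂ) :
    altTheta m (c + 2 * m) τ = -altTheta m c τ := by
  unfold altTheta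
  rw [← (Equiv.subRight (1 : ℤ)).tsum_eq, ← tsum_neg]
  refine tsum_congr fun n => ?_
  rw [Equiv.subRight_apply, zpow_sub_one₀ (by norm_num), inv_neg_one, mul_neg_one, neg_mul]
  congr 5
  push_cast
  ring

lemma altTheta_eq_jacobiTheta₂ (m : ℕ) [NeZero m] (c : ℤ) (τ : ℂ) :
    altTheta m c τ = 𝐞(c ^ 2 / (8 * m) * τ) * jacobiTheta₂ (1 / 2 + c * τ / 2) (m * τ) := by
  have hm : (m : ℂ) ≠ 0 := NeZero.ne _
  rw [altTheta, jacobiTheta₂, ← tsum_mul_left]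
  refine tsum_congr fun n => ?_
  rw [jacobiTheta₂_term, ← Complex.exp_pi_mul_I, ← exp_int_mul, ← Complex.exp_add,
    ← Complex.exp_add]
  congr 1
  field_simp
  ring

lemma differentiableAt_altTheta (m : ℕ) [NeZero m] (c : ℤ) {τ : ℂ} (hτ : 0 < τ.im) :
    DifferentiableAt ℂ (altTheta m c) τ := by
  have him : 0 < (m * τ).im := by
    rw [← nsmul_eq_mul, smul_im]
    exact nsmul_pos hτ (NeZero.ne _)
  have htheta : DifferentiableAt ℂ (fun τ => jacobiTheta₂ (1 / 2 + c * τ / 2) (m * τ)) τ :=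
    (hasFDerivAt_jacobiTheta₂ _ him).differentiableAt.comp τ
      (f := fun τ : ℂ => (1 / 2 + c * τ / 2, m * τ)) (by fun_prop)
  rw [funext (altTheta_eq_jacobiTheta₂ m c)]
  fun_prop

lemma exp_int_mul_odd_mul_pi_mul_I {c : ℤ} (hc : Odd c) (k : ℤ) :
    cexp (k * c * (π * I)) = (-1 : ℂ) ^ k := by
  rw [mul_comm (k : ℂ), ← Int.cast_mul, exp_int_mul, Complex.exp_pi_mul_I, zpow_mul,
    hc.neg_one_zpow]

lemma jacobiTheta₂_eq_sum_altTheta (m : ℕ) [NeZero m] {c : ℤ} (hc : Odd c) {τ : ℂ}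
    (hτ : 0 < τ.im) :
    𝐞(τ / (8 * m)) * jacobiTheta₂ ((c - τ) / (2 * m)) (τ / m) =
      ∑ j : Fin m, 𝐞(c * (j : ℕ) / (2 * m)) * altTheta m (2 * (j : ℕ) - 1) τ := by
  have hm : (m : ℂ) ≠ 0 := NeZero.ne _
  have him : 0 < (τ / m).im := by
    rw [Complex.div_natCast_im]
    exact div_pos hτ (Nat.cast_pos.mpr (Nat.pos_of_neZero m))
  have hsplit := ((Int.divModEquiv m).trans (Equiv.prodComm ℤ (Fin m))).symm.hasSum_iff.mpr
    ((hasSum_jacobiTheta₂_term ((c - τ) / (2 * m)) him).mul_left 𝐞(τ / (8 * m)))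
  rw [← hsplit.tsum_eq, hsplit.summable.tsum_prod, tsum_fintype]
  refine Finset.sum_congr rfl fun j _ => ?_
  rw [altTheta, ← tsum_mul_left]
  refine tsum_congr fun k => ?_
  simp only [Function.comp, Equiv.symm_trans_apply, Equiv.prodComm_symm, Equiv.prodComm_apply,
    Int.divModEquiv_symm_apply, Prod.fst_swap, Prod.snd_swap]
  rw [jacobiTheta₂_term, ← exp_int_mul_odd_mul_pi_mul_I hc, ← Complex.exp_add, ← Complex.exp_add,
    ← Complex.exp_add]
  congr 1
  push_cast
  field_simp
  ring

theorem altTheta_neg_one_div (m : ℕ) [NeZero m] {c : ℤ} (hc : Odd c) {τ : ℂ} (hτ : 0 < τ.im) :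
    altTheta m c (-1 / τ) = (-I * τ / m) ^ (1 / 2 : ℂ) *
      ∑ j : Fin m, 𝐞(c * (2 * (j : ℕ) - 1) / (4 * m)) * altTheta m (2 * (j : ℕ) - 1) τ := by
  have hm : (m : ℂ) ≠ 0 := NeZero.ne _
  have hτ0 : τ ≠ 0 := by
    rintro rfl
    exact hτ.ne' zero_im
  have hsqrt : (-I * (τ / m)) ^ (1 / 2 : ℂ) ≠ 0 := by simp [cpow_eq_zero_iff, hm, hτ0]
  have hphase : ∑ j : Fin m, 𝐞(c * (2 * (j : ℕ) - 1) / (4 * m)) * altTheta m (2 * (j : ℕ) - 1) τ =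
      𝐞(-(c / (4 * m))) * (𝐞(τ / (8 * m)) * jacobiTheta₂ ((c - τ) / (2 * m)) (τ / m)) := by
    rw [jacobiTheta₂_eq_sum_altTheta m hc hτ, Finset.mul_sum]
    refine Finset.sum_congr rfl fun j _ => ?_
    rw [← mul_assoc, ← Complex.exp_add]
    congr 2
    ring
  have hexp : 𝐞(c ^ 2 / (8 * m) * (-1 / τ)) = 𝐞(-(c / (4 * m))) * 𝐞(τ / (8 * m)) *
      cexp (-π * I * ((c - τ) / (2 * m)) ^ 2 / (τ / m)) := by
    rw [← Complex.exp_add, ← Complex.exp_add]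
    congr 1
    field_simp
    ring
  rw [hphase, jacobiTheta₂_functional_equation, altTheta_eq_jacobiTheta₂, hexp,
    ← jacobiTheta₂_neg_left, mul_div_assoc (-I),
    show -(1 / 2 + c * (-1 / τ) / 2) = (c - τ) / (2 * m) / (τ / m) by field_simp; ring,
    show -1 / (τ / m) = m * (-1 / τ) by field_simp]
  generalize (-I * (τ / m)) ^ (1 / 2 : ℂ) = s at hsqrt ⊢
  field_simp

/-- The product side `(q ^ (r + s), q ^ r, q ^ s; q ^ (r + s))_∞` of the Jacobi triple product for
`∑ (-1)ⁿ q ^ ((r + s) n² / 2 + (s - r) n / 2)`. -/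
noncomputable def thetaProd {R : Type*} [CommRing R] [TopologicalSpace R] (r s : ℕ) (q : R) : R :=
  qPochhammer (q ^ (r + s)) (q ^ (r + s)) *
    (qPochhammer (q ^ r) (q ^ (r + s)) * qPochhammer (q ^ s) (q ^ (r + s)))

lemma differentiableOn_thetaProd (r s : ℕ) [NeZero (r + s)] :
    DifferentiableOn ℂ (thetaProd r s : ℂ → ℂ) (Metric.ball 0 1) :=
  have hrs : r + s ≠ 0 := NeZero.ne _
  (differentiableOn_qPochhammer_pow (r + s) hrs).mul
    ((differentiableOn_qPochhammer_pow r hrs).mul (differentiableOn_qPochhammer_pow s hrs))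

lemma thetaProd_zero {R : Type*} [CommRing R] [TopologicalSpace R] {r s : ℕ} (hr : r ≠ 0)
    (hs : s ≠ 0) : thetaProd r s (0 : R) = 1 := by
  simp [thetaProd, qPochhammer, hr, hs]

lemma thetaProd_ne_zero {𝕜 : Type*} [NormedField 𝕜] [CompleteSpace 𝕜] {r s : ℕ} (hr : r ≠ 0)
    (hs : s ≠ 0) {q : 𝕜} (hq : ‖q‖ < 1) : thetaProd r s q ≠ 0 := by
  have hrs : r + s ≠ 0 := by omega
  have hne {n : ℕ} (hn : n ≠ 0) : qPochhammer (q ^ n) (q ^ (r + s)) ≠ 0 :=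
    qPochhammer_ne_zero (norm_pow_lt_one hq hn) (norm_pow_lt_one hq hrs)
  exact mul_ne_zero (hne hrs) (mul_ne_zero (hne hr) (hne hs))

theorem altTheta_eq_thetaProd (r s : ℕ) [NeZero (r + s)] {τ : ℂ} (hτ : 0 < τ.im) :
    altTheta (r + s) (s - r) τ =
      𝐞((s - r) ^ 2 / (8 * (r + s)) * τ) * thetaProd r s 𝐞(τ) := by
  have him : 0 < (((r + s : ℕ) : ℂ) * τ).im := by
    rw [← nsmul_eq_mul, smul_im]
    exact nsmul_pos hτ (NeZero.ne _)
  have hpow (n : ℕ) : 𝐞(τ) ^ n = 𝐞(n * τ) := by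
    rw [← Complex.exp_nat_mul]
    congr 1
    ring
  have hhalf (z : ℂ) : -𝐞(z + 1 / 2) = 𝐞(z) := by
    rw [mul_add, Complex.exp_add, show 2 * π * I * (1 / 2) = π * I by ring, Complex.exp_pi_mul_I,
      mul_neg_one, neg_neg]
  have hhalf' (z : ℂ) : -𝐞(z - 1 / 2) = 𝐞(z) := by rw [← hhalf (z - 1 / 2), sub_add_cancel, neg_neg]
  rw [altTheta_eq_jacobiTheta₂, jacobiTheta₂_eq_qPochhammer _ him, thetaProd]
  simp only [hpow]
  push_cast
  congr 4
  · rw [← hhalf' (r * τ)]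
    congr 3
    ring
  · rw [← hhalf (s * τ)]
    congr 3
    ring

end Theta

section LevelOne

open UpperHalfPlane ModularForm ModularGroup SlashInvariantForm MatrixGroups Filter Topology

local notation "𝐞(" z ")" => Complex.exp (2 * π * Complex.I * z)

variable {G : ℂ → ℂ}

lemma qParam_one_eq_exp (τ : ℂ) : Function.Periodic.qParam 1 τ = 𝐞(τ) := by
  simp [Function.Periodic.qParam]

lemma coe_S_smul (τ : ℍ) : ((S • τ : ℍ) : ℂ) = -1 / τ := by
  rw [modular_S_smul, neg_div, one_div, ← inv_neg]

lemma slash_SL2Z_of_neg_one_div {k : ℤ} (hS : ∀ τ : ℍ, G 𝐞(-1 / τ) = τ ^ k * G 𝐞(τ))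
    (γ : SL(2, ℤ)) : (fun τ : ℍ => G 𝐞(τ)) ∣[k] γ = fun τ : ℍ => G 𝐞(τ) := by
  refine slash_action_generators_SL2Z ?_ ?_ γ
  · ext τ
    rw [SL_slash_apply, coe_S_smul, hS, denom_S, zpow_neg, mul_right_comm,
      mul_inv_cancel₀ (zpow_ne_zero k τ.ne_zero), one_mul]
  · ext τ
    have hdenom : denom T τ = 1 := by simp [denom, coe_T]
    rw [SL_slash_apply, modular_T_smul, hdenom]
    simp [mul_add, Complex.exp_add]

lemma tendsto_comp_exp_atImInfty (hG : ContinuousAt G 0) :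
    Tendsto (fun τ : ℍ => G 𝐞(τ)) atImInfty (𝓝 (G 0)) :=
  hG.tendsto.comp <| (qParam_tendsto_atImInfty zero_lt_one).congr fun τ => qParam_one_eq_exp τ

lemma differentiableOn_comp_exp (hG : DifferentiableOn ℂ G (Metric.ball 0 1)) :
    DifferentiableOn ℂ (fun τ => G 𝐞(τ)) {τ | 0 < τ.im} :=
  hG.comp (by fun_prop) fun _ hτ => mem_ball_zero_iff.mpr (norm_exp_two_pi_mul_I_mul_lt_one hτ)

lemma continuousAt_zero_of_differentiableOn_ball (hG : DifferentiableOn ℂ G (Metric.ball 0 1)) :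
    ContinuousAt G 0 :=
  (hG.differentiableAt (Metric.ball_mem_nhds 0 one_pos)).continuousAt

/-- The modular form of level one whose `q`-expansion is a function `G` holomorphic on the unit
disc; only the behaviour under `τ ↦ -1 / τ` has to be checked. -/
noncomputable def modularFormOfBall (hG : DifferentiableOn ℂ G (Metric.ball 0 1)) {k : ℤ}
    (hS : ∀ τ : ℍ, G 𝐞(-1 / τ) = τ ^ k * G 𝐞(τ)) : ModularForm 𝒮ℒ k where
  toFun τ := G 𝐞(τ)
  slash_action_eq' := by
    rintro _ ⟨γ, rfl⟩
    exact slash_SL2Z_of_neg_one_div hS γ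
  holo' := by
    rw [UpperHalfPlane.mdifferentiable_iff]
    refine (differentiableOn_comp_exp hG).congr fun τ hτ => ?_
    simp [ofComplex_apply_of_im_pos hτ]
  bdd_at_cusps' := by
    intro c hc
    rw [Subgroup.IsArithmetic.isCusp_iff_isCusp_SL2Z] at hc
    rw [OnePoint.isBoundedAt_iff_forall_SL2Z hc]
    intro γ _
    rw [slash_SL2Z_of_neg_one_div hS]
    exact (tendsto_comp_exp_atImInfty
      (continuousAt_zero_of_differentiableOn_ball hG)).isBigO_one ℝ

theorem eq_apply_zero_of_neg_one_div (hG : DifferentiableOn ℂ G (Metric.ball 0 1))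
    (hS : ∀ τ : ℍ, G 𝐞(-1 / τ) = G 𝐞(τ)) {q : ℂ} (hq : ‖q‖ < 1) : G q = G 0 := by
  obtain ⟨c, hc⟩ := ModularFormClass.levelOne_weight_zero_const
    (modularFormOfBall hG (k := 0) fun τ => by rw [hS, zpow_zero, one_mul])
  have hconst (τ : ℍ) : G 𝐞(τ) = c := congrFun hc τ
  have hzero : G 0 = c :=
    tendsto_nhds_unique
      (tendsto_comp_exp_atImInfty (continuousAt_zero_of_differentiableOn_ball hG))
      (by simp only [hconst, tendsto_const_nhds])
  rcases eq_or_ne q 0 with rfl | hq0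
  · rfl
  · have h := hconst ⟨_, Function.Periodic.im_invQParam_pos_of_norm_lt_one one_pos hq hq0⟩
    rw [UpperHalfPlane.coe_mk, ← qParam_one_eq_exp,
      Function.Periodic.qParam_right_inv one_ne_zero hq0] at h
    rw [h, hzero]

lemma eta_eq_qPochhammer (τ : ℂ) : eta τ = 𝐞(τ / 24) * qPochhammer 𝐞(τ) 𝐞(τ) := by
  simp [eta, eta_q, Function.Periodic.qParam, qPochhammer, pow_succ', mul_div_assoc]

lemma eta_neg_one_div_sq (τ : ℍ) : eta (-1 / τ) ^ 2 = -Complex.I * τ * eta τ ^ 2 := by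
  have hsq {z : ℂ} (hz : z ≠ 0) : Complex.sqrt z ^ 2 = z := by
    rw [_root_.sqrt_eq_exp hz, ← Complex.exp_nat_mul, Nat.cast_ofNat,
      mul_div_cancel₀ _ two_ne_zero, Complex.exp_log hz]
  have h := eta_comp_eq_csqrt_I_inv τ.2
  simp only [Function.comp, Pi.smul_apply, Pi.mul_apply, smul_eq_mul] at h
  rw [h, mul_pow, mul_pow, inv_pow, hsq Complex.I_ne_zero, hsq τ.ne_zero, Complex.inv_I]
  ring

theorem eq_mul_qPochhammer_pow_of_neg_one_div {Φ : ℂ → ℂ}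
    (hΦ : DifferentiableOn ℂ Φ (Metric.ball 0 1)) (k : ℕ) {F : ℂ → ℂ}
    (hF : ∀ τ : ℍ, F τ = 𝐞(k / 12 * τ) * Φ 𝐞(τ))
    (hS : ∀ τ : ℍ, F (-1 / τ) = (-Complex.I * τ) ^ k * F τ) {q : ℂ} (hq : ‖q‖ < 1) :
    Φ q = Φ 0 * qPochhammer q q ^ (2 * k) := by
  have hne {q : ℂ} (hq : ‖q‖ < 1) : qPochhammer q q ≠ 0 := qPochhammer_ne_zero hq hq
  have hdiff : DifferentiableOn ℂ (fun q => Φ q / qPochhammer q q ^ (2 * k)) (Metric.ball 0 1) := by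
    refine hΦ.div (DifferentiableOn.pow ?_ _) fun q hq =>
      pow_ne_zero _ (hne (mem_ball_zero_iff.mp hq))
    simpa only [pow_one] using differentiableOn_qPochhammer_pow 1 one_ne_zero
  have hquot (τ : ℍ) : Φ 𝐞(τ) / qPochhammer 𝐞(τ) 𝐞(τ) ^ (2 * k) = F τ / eta τ ^ (2 * k) := by
    have hexp : 𝐞(k / 12 * τ) = 𝐞(τ / 24) ^ (2 * k) := by
      rw [← Complex.exp_nat_mul]
      congr 1
      push_cast
      ring
    rw [hF, eta_eq_qPochhammer, mul_pow, ← hexp, mul_div_mul_left _ _ (Complex.exp_ne_zero _)]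
  have hinv (τ : ℍ) : Φ 𝐞(-1 / τ) / qPochhammer 𝐞(-1 / τ) 𝐞(-1 / τ) ^ (2 * k) =
      Φ 𝐞(τ) / qPochhammer 𝐞(τ) 𝐞(τ) ^ (2 * k) := by
    have hτ : (-Complex.I * τ : ℂ) ≠ 0 := mul_ne_zero (neg_ne_zero.mpr Complex.I_ne_zero) τ.ne_zero
    rw [← coe_S_smul, hquot, hquot, coe_S_smul, hS, pow_mul (eta _), eta_neg_one_div_sq,
      mul_pow _ (eta _ ^ 2), ← pow_mul, mul_div_mul_left _ _ (pow_ne_zero k hτ)]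
  have h := eq_apply_zero_of_neg_one_div hdiff hinv hq
  rw [div_eq_iff (pow_ne_zero _ (hne hq))] at h
  simpa [qPochhammer] using h

end LevelOne

section Wronskian

open Topology

/-- The Wronskian `f g' - f' g`, which is meaningful where `f` and `g` are differentiable. -/
noncomputable def wronskian {𝕜 : Type*} [NontriviallyNormedField 𝕜] (f g : 𝕜 → 𝕜) (z : 𝕜) : 𝕜 :=
  f z * deriv g z - deriv f z * g z

variable {𝕜 : Type*} [NontriviallyNormedField 𝕜] {f g : 𝕜 → 𝕜} {z : 𝕜}

lemma wronskian_congr {f₁ g₁ : 𝕜 → 𝕜} (hf : f =ᶠ[𝓝 z] f₁) (hg : g =ᶠ[𝓝 z] g₁) :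
    wronskian f g z = wronskian f₁ g₁ z := by
  rw [wronskian, wronskian, hf.deriv_eq, hg.deriv_eq, hf.eq_of_nhds, hg.eq_of_nhds]

lemma wronskian_mul_mul {s : 𝕜 → 𝕜} (hs : DifferentiableAt 𝕜 s z) (hf : DifferentiableAt 𝕜 f z)
    (hg : DifferentiableAt 𝕜 g z) :
    wronskian (fun x => s x * f x) (fun x => s x * g x) z = s z ^ 2 * wronskian f g z := by
  rw [wronskian, wronskian, deriv_fun_mul hs hf, deriv_fun_mul hs hg]
  ring

lemma wronskian_linearCombination (hf : DifferentiableAt 𝕜 f z) (hg : DifferentiableAt 𝕜 g z)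
    (a b c d : 𝕜) :
    wronskian (fun x => a * f x + b * g x) (fun x => c * f x + d * g x) z =
      (a * d - b * c) * wronskian f g z := by
  have hderiv (a b : 𝕜) : deriv (fun x => a * f x + b * g x) z = a * deriv f z + b * deriv g z :=
    ((hf.hasDerivAt.const_mul a).add (hg.hasDerivAt.const_mul b)).deriv
  rw [wronskian, wronskian, hderiv, hderiv]
  ring

lemma wronskian_comp {h : 𝕜 → 𝕜} (hh : DifferentiableAt 𝕜 h z) (hf : DifferentiableAt 𝕜 f (h z))
    (hg : DifferentiableAt 𝕜 g (h z)) :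
    wronskian (f ∘ h) (g ∘ h) z = deriv h z * wronskian f g (h z) := by
  rw [wronskian, wronskian, deriv_comp z hf hh, deriv_comp z hg hh]
  simp only [Function.comp]
  ring

local notation "𝐞(" z ")" => Complex.exp (2 * π * Complex.I * z)

lemma deriv_exp_mul_comp_exp {f : ℂ → ℂ} (a : ℂ) {τ : ℂ} (hf : DifferentiableAt ℂ f 𝐞(τ)) :
    deriv (fun τ => 𝐞(a * τ) * f 𝐞(τ)) τ =
      2 * π * Complex.I * 𝐞(a * τ) * (a * f 𝐞(τ) + 𝐞(τ) * deriv f 𝐞(τ)) := by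
  have hexp (a : ℂ) : HasDerivAt (fun τ => 𝐞(a * τ)) (𝐞(a * τ) * (2 * π * Complex.I * a)) τ := by
    simpa using (((hasDerivAt_id τ).const_mul a).const_mul (2 * π * Complex.I)).cexp
  have hq := hexp 1
  simp only [one_mul] at hq
  refine ((hexp a).mul (hf.hasDerivAt.comp τ hq)).deriv.trans ?_
  simp only [Function.comp]
  ring

lemma wronskian_exp_mul_comp_exp {f g : ℂ → ℂ} (a b : ℂ) {τ : ℂ} (hf : DifferentiableAt ℂ f 𝐞(τ))
    (hg : DifferentiableAt ℂ g 𝐞(τ)) :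
    wronskian (fun τ => 𝐞(a * τ) * f 𝐞(τ)) (fun τ => 𝐞(b * τ) * g 𝐞(τ)) τ =
      2 * π * Complex.I * 𝐞((a + b) * τ) *
        ((b - a) * (f 𝐞(τ) * g 𝐞(τ)) + 𝐞(τ) * wronskian f g 𝐞(τ)) := by
  rw [wronskian, wronskian, deriv_exp_mul_comp_exp a hf, deriv_exp_mul_comp_exp b hg, add_mul,
    mul_add (2 * π * Complex.I) (a * τ), Complex.exp_add]
  ring

end Wronskian

section LevelFive

open Complex Topology

local notation "𝐞(" z ")" => cexp (2 * π * I * z)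

local notation "κ₁" => 2 * Complex.cos (π / 10)

local notation "κ₃" => 2 * Complex.cos (3 * π / 10)

lemma sq_two_cos_add_sq_two_cos : κ₁ ^ 2 + κ₃ ^ 2 = 5 ∧ κ₁ ^ 2 = κ₁ * κ₃ + κ₃ ^ 2 := by
  have hx : 4 * Real.cos (π / 5) ^ 2 - 2 * Real.cos (π / 5) - 1 = 0 := by
    rw [Real.cos_pi_div_five]
    grind
  have hfirst : (2 * Real.cos (π / 10)) ^ 2 = 2 + 2 * Real.cos (π / 5) := by
    rw [mul_pow, Real.cos_sq]
    ring_nf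
  have hmid : (2 * Real.cos (3 * π / 10)) ^ 2 = 4 - 4 * Real.cos (π / 5) ^ 2 := by
    rw [mul_pow, Real.cos_sq, show 2 * (3 * π / 10) = π - 2 * (π / 5) by ring, Real.cos_pi_sub,
      Real.cos_two_mul]
    ring
  have hmixed : 2 * Real.cos (π / 10) * (2 * Real.cos (3 * π / 10)) =
      2 * (2 * Real.cos (π / 5) ^ 2 - 1 + Real.cos (π / 5)) := by
    have h := Real.cos_add_cos (2 * (π / 5)) (π / 5)
    rw [Real.cos_two_mul, show (2 * (π / 5) + π / 5) / 2 = 3 * π / 10 by ring,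
      show (2 * (π / 5) - π / 5) / 2 = π / 10 by ring] at h
    linarith
  constructor
  · exact_mod_cast (by linarith :
      (2 * Real.cos (π / 10)) ^ 2 + (2 * Real.cos (3 * π / 10)) ^ 2 = 5)
  · exact_mod_cast (by linarith : (2 * Real.cos (π / 10)) ^ 2 =
      2 * Real.cos (π / 10) * (2 * Real.cos (3 * π / 10)) + (2 * Real.cos (3 * π / 10)) ^ 2)

lemma altTheta_five_five (τ : ℂ) : altTheta 5 5 τ = 0 := by
  have h := altTheta_add_two_mul 5 (-5) τ
  norm_num [altTheta_neg] at h
  linear_combination h / 2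

lemma altTheta_five_seven (τ : ℂ) : altTheta 5 7 τ = -altTheta 5 3 τ := by
  have h := altTheta_add_two_mul 5 (-3) τ
  norm_num [altTheta_neg] at h
  exact h

lemma altTheta_five_neg_one_div {c : ℤ} (hc : Odd c) {τ : ℂ} (hτ : 0 < τ.im) :
    altTheta 5 c (-1 / τ) = (-I * τ / 5) ^ (1 / 2 : ℂ) *
      (2 * Complex.cos (c * (π / 10)) * altTheta 5 1 τ +
        2 * Complex.cos (c * (3 * π / 10)) * altTheta 5 3 τ) := by
  have hone : 𝐞(-c / 20) + 𝐞(c / 20) = 2 * Complex.cos (c * (π / 10)) := by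
    rw [two_cos, add_comm]
    congr 2 <;> ring
  have hseven : 𝐞(c * 7 / 20) = -𝐞(-(c * 3 / 20)) := by
    rw [neg_eq_neg_one_mul, ← zpow_one (-1 : ℂ), ← exp_int_mul_odd_mul_pi_mul_I hc 1,
      ← Complex.exp_add]
    congr 1
    push_cast
    ring
  have hthree : 𝐞(c * 3 / 20) - 𝐞(c * 7 / 20) = 2 * Complex.cos (c * (3 * π / 10)) := by
    rw [two_cos, hseven, sub_neg_eq_add]
    congr 2 <;> ring
  rw [altTheta_neg_one_div 5 hc hτ, Fin.sum_univ_five, ← hone, ← hthree]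
  norm_num [altTheta_neg, altTheta_five_five, altTheta_five_seven]
  left
  ring

lemma altTheta_five_one_neg_one_div {τ : ℂ} (hτ : 0 < τ.im) :
    altTheta 5 1 (-1 / τ) =
      (-I * τ / 5) ^ (1 / 2 : ℂ) * (κ₁ * altTheta 5 1 τ + κ₃ * altTheta 5 3 τ) := by
  simpa using altTheta_five_neg_one_div odd_one hτ

lemma altTheta_five_three_neg_one_div {τ : ℂ} (hτ : 0 < τ.im) :
    altTheta 5 3 (-1 / τ) =
      (-I * τ / 5) ^ (1 / 2 : ℂ) * (κ₃ * altTheta 5 1 τ - κ₁ * altTheta 5 3 τ) := by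
  have hcos : Complex.cos (3 * (3 * π / 10)) = -Complex.cos (π / 10) := by
    rw [← Complex.cos_pi_sub]
    congr 1
    ring
  rw [altTheta_five_neg_one_div (c := 3) (by decide) hτ]
  push_cast
  rw [hcos]
  ring_nf

lemma altTheta_five_one_eq {τ : ℂ} (hτ : 0 < τ.im) :
    altTheta 5 1 τ = 𝐞(1 / 40 * τ) * thetaProd 2 3 𝐞(τ) := by
  have h := altTheta_eq_thetaProd 2 3 hτ
  norm_num at h
  rw [h]

lemma altTheta_five_three_eq {τ : ℂ} (hτ : 0 < τ.im) :
    altTheta 5 3 τ = 𝐞(9 / 40 * τ) * thetaProd 1 4 𝐞(τ) := by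
  have h := altTheta_eq_thetaProd 1 4 hτ
  norm_num at h
  rw [h]

/-- Klein's form of degree `12`, an invariant of the binary icosahedral group: it vanishes at the
vertices of the icosahedron. -/
def kleinForm {R : Type*} [CommRing R] (a b : R) : R :=
  a * b * (b ^ 10 - 11 * a ^ 5 * b ^ 5 - a ^ 10)

lemma kleinForm_mul_mul {R : Type*} [CommRing R] (s a b : R) :
    kleinForm (s * a) (s * b) = s ^ 12 * kleinForm a b := by
  unfold kleinForm
  ring

lemma kleinForm_reflection {R : Type*} [CommRing R] {x y : R} (hnorm : x ^ 2 + y ^ 2 = 5)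
    (hgolden : x ^ 2 = x * y + y ^ 2) (a b : R) :
    kleinForm (y * b - x * a) (x * b + y * a) = 5 ^ 6 * kleinForm a b := by
  unfold kleinForm
  grind

lemma cpow_half_sq (z : ℂ) : (z ^ (1 / 2 : ℂ)) ^ 2 = z := by
  rw [one_div]
  exact cpow_ofNat_inv_pow z 2

lemma kleinForm_altTheta_neg_one_div {τ : ℂ} (hτ : 0 < τ.im) :
    kleinForm (altTheta 5 3 (-1 / τ)) (altTheta 5 1 (-1 / τ)) =
      (-I * τ) ^ 6 * kleinForm (altTheta 5 3 τ) (altTheta 5 1 τ) := by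
  obtain ⟨hnorm, hgolden⟩ := sq_two_cos_add_sq_two_cos
  rw [altTheta_five_one_neg_one_div hτ, altTheta_five_three_neg_one_div hτ, kleinForm_mul_mul,
    kleinForm_reflection hnorm hgolden, show 12 = 2 * 6 by norm_num, pow_mul, cpow_half_sq]
  ring

lemma kleinForm_altTheta_eq {τ : ℂ} (hτ : 0 < τ.im) :
    kleinForm (altTheta 5 3 τ) (altTheta 5 1 τ) = 𝐞(6 / 12 * τ) *
      (thetaProd 1 4 𝐞(τ) * thetaProd 2 3 𝐞(τ) * (thetaProd 2 3 𝐞(τ) ^ 10 -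
        11 * 𝐞(τ) * thetaProd 1 4 𝐞(τ) ^ 5 * thetaProd 2 3 𝐞(τ) ^ 5 -
          𝐞(τ) ^ 2 * thetaProd 1 4 𝐞(τ) ^ 10)) := by
  have hpow (n : ℕ) (a : ℂ) (ha : a = n / 40) : 𝐞(a * τ) = 𝐞(τ / 40) ^ n := by
    rw [ha, ← Complex.exp_nat_mul]
    congr 1
    ring
  have hq : 𝐞(τ) = 𝐞(τ / 40) ^ 40 := by simpa using hpow 40 1 (by norm_num)
  rw [altTheta_five_one_eq hτ, altTheta_five_three_eq hτ, hpow 1 (1 / 40) (by norm_num),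
    hpow 9 (9 / 40) (by norm_num), hpow 20 (6 / 12) (by norm_num)]
  generalize thetaProd 1 4 𝐞(τ) = A
  generalize thetaProd 2 3 𝐞(τ) = B
  rw [hq, kleinForm]
  ring

theorem kleinForm_thetaProd_eq_qPochhammer_pow {q : ℂ} (hq : ‖q‖ < 1) :
    thetaProd 1 4 q * thetaProd 2 3 q * (thetaProd 2 3 q ^ 10 -
      11 * q * thetaProd 1 4 q ^ 5 * thetaProd 2 3 q ^ 5 - q ^ 2 * thetaProd 1 4 q ^ 10) =
      qPochhammer q q ^ 12 := by
  have hA := differentiableOn_thetaProd 1 4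
  have hB := differentiableOn_thetaProd 2 3
  have h := eq_mul_qPochhammer_pow_of_neg_one_div
    (Φ := fun q => thetaProd 1 4 q * thetaProd 2 3 q * (thetaProd 2 3 q ^ 10 -
      11 * q * thetaProd 1 4 q ^ 5 * thetaProd 2 3 q ^ 5 - q ^ 2 * thetaProd 1 4 q ^ 10))
    (by fun_prop) 6 (F := fun τ => kleinForm (altTheta 5 3 τ) (altTheta 5 1 τ))
    (fun τ => kleinForm_altTheta_eq τ.2) (fun τ => kleinForm_altTheta_neg_one_div τ.2) hq
  simpa [thetaProd_zero] using h

lemma wronskian_altTheta_comp_neg_one_div {τ : ℂ} (hτ : 0 < τ.im) :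
    wronskian (altTheta 5 1 ∘ fun z => -1 / z) (altTheta 5 3 ∘ fun z => -1 / z) τ =
      I * τ * wronskian (altTheta 5 1) (altTheta 5 3) τ := by
  have hslit : -I * τ / 5 ∈ slitPlane := .inl (by simpa using hτ)
  have hsqrt : DifferentiableAt ℂ (fun z : ℂ => (-I * z / 5) ^ (1 / 2 : ℂ)) τ :=
    DifferentiableAt.cpow (by fun_prop) (by fun_prop) hslit
  have hdiff (c : ℤ) : DifferentiableAt ℂ (altTheta 5 c) τ := differentiableAt_altTheta 5 c hτ
  have hupper : ∀ᶠ z : ℂ in 𝓝 τ, 0 < z.im :=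
    (isOpen_lt continuous_const continuous_im).mem_nhds hτ
  have hone : (altTheta 5 1 ∘ fun z => -1 / z) =ᶠ[𝓝 τ] fun z =>
      (-I * z / 5) ^ (1 / 2 : ℂ) * (κ₁ * altTheta 5 1 z + κ₃ * altTheta 5 3 z) :=
    hupper.mono fun z hz => altTheta_five_one_neg_one_div hz
  have hthree : (altTheta 5 3 ∘ fun z => -1 / z) =ᶠ[𝓝 τ] fun z =>
      (-I * z / 5) ^ (1 / 2 : ℂ) * (κ₃ * altTheta 5 1 z + -κ₁ * altTheta 5 3 z) :=
    hupper.mono fun z hz => (altTheta_five_three_neg_one_div hz).trans (by ring)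
  rw [wronskian_congr hone hthree, wronskian_mul_mul hsqrt (by fun_prop) (by fun_prop),
    wronskian_linearCombination (hdiff 1) (hdiff 3), cpow_half_sq]
  linear_combination I * τ / 5 * wronskian (altTheta 5 1) (altTheta 5 3) τ *
    sq_two_cos_add_sq_two_cos.1

lemma wronskian_altTheta_neg_one_div {τ : ℂ} (hτ : 0 < τ.im) :
    wronskian (altTheta 5 1) (altTheta 5 3) (-1 / τ) =
      (-I * τ) ^ 3 * wronskian (altTheta 5 1) (altTheta 5 3) τ := by
  have hτ0 : τ ≠ 0 := by
    rintro rfl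
    exact hτ.ne' zero_im
  have hinv : HasDerivAt (fun z : ℂ => -1 / z) (1 / τ ^ 2) τ := by
    simpa [neg_div] using (hasDerivAt_inv hτ0).fun_neg
  have him : 0 < (-1 / τ).im := by
    simpa [neg_div] using UpperHalfPlane.im_inv_neg_coe_pos ⟨τ, hτ⟩
  have hcomp := wronskian_comp hinv.differentiableAt (differentiableAt_altTheta 5 1 him)
    (differentiableAt_altTheta 5 3 him)
  rw [wronskian_altTheta_comp_neg_one_div hτ, hinv.deriv, div_mul_eq_mul_div, one_mul,
    eq_div_iff (pow_ne_zero 2 hτ0)] at hcomp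
  rw [← hcomp, mul_pow, neg_pow, I_pow_three]
  ring

lemma wronskian_altTheta_eq {τ : ℂ} (hτ : 0 < τ.im) :
    5 / (2 * π * I) * wronskian (altTheta 5 1) (altTheta 5 3) τ = 𝐞(3 / 12 * τ) *
      (thetaProd 1 4 𝐞(τ) * thetaProd 2 3 𝐞(τ) +
        5 * 𝐞(τ) * wronskian (thetaProd 2 3) (thetaProd 1 4) 𝐞(τ)) := by
  have hdisc : Metric.ball 0 1 ∈ 𝓝 𝐞(τ) :=
    Metric.isOpen_ball.mem_nhds (mem_ball_zero_iff.mpr (norm_exp_two_pi_mul_I_mul_lt_one hτ))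
  have hupper : ∀ᶠ z : ℂ in 𝓝 τ, 0 < z.im :=
    (isOpen_lt continuous_const continuous_im).mem_nhds hτ
  rw [wronskian_congr (hupper.mono fun z hz => altTheta_five_one_eq hz)
    (hupper.mono fun z hz => altTheta_five_three_eq hz), wronskian_exp_mul_comp_exp _ _
    ((differentiableOn_thetaProd 2 3).differentiableAt hdisc)
    ((differentiableOn_thetaProd 1 4).differentiableAt hdisc),
    show (1 / 40 + 9 / 40 : ℂ) = 3 / 12 by norm_num]
  have hpi : (π : ℂ) ≠ 0 := ofReal_ne_zero.mpr pi_ne_zero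
  field_simp
  ring

theorem wronskian_thetaProd_eq_qPochhammer_pow {q : ℂ} (hq : ‖q‖ < 1) :
    thetaProd 1 4 q * thetaProd 2 3 q + 5 * q * wronskian (thetaProd 2 3) (thetaProd 1 4) q =
      qPochhammer q q ^ 6 := by
  have hA := differentiableOn_thetaProd 1 4
  have hB := differentiableOn_thetaProd 2 3
  have hA' := hA.deriv Metric.isOpen_ball
  have hB' := hB.deriv Metric.isOpen_ball
  have h := eq_mul_qPochhammer_pow_of_neg_one_div
    (Φ := fun q => thetaProd 1 4 q * thetaProd 2 3 q +
      5 * q * wronskian (thetaProd 2 3) (thetaProd 1 4) q)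
    (by unfold wronskian; fun_prop) 3
    (F := fun τ => 5 / (2 * π * I) * wronskian (altTheta 5 1) (altTheta 5 3) τ)
    (fun τ => wronskian_altTheta_eq τ.2)
    (fun τ => by rw [wronskian_altTheta_neg_one_div τ.2]; ring) hq
  simpa [thetaProd_zero] using h

end LevelFive

section RogersRamanujan

open Topology

lemma thetaProd_one_four_mul_thetaProd_two_three {𝕜 : Type*} [NormedField 𝕜] [CompleteSpace 𝕜]
    {q : 𝕜} (hq : ‖q‖ < 1) : thetaProd 1 4 q * thetaProd 2 3 q =
      qPochhammer q q * qPochhammer (q ^ 5) (q ^ 5) := by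
  rw [qPochhammer_eq_prod_pow 5 q hq, Fin.prod_univ_five]
  simp only [thetaProd, ← pow_succ', Fin.coe_ofNat_eq_mod, Nat.reduceAdd, Nat.reduceMod]
  ring

/-- The fifth power of the Rogers–Ramanujan product. Unlike `rrProd` it involves no fractional
power of `q`, hence makes sense over any topological field; the factors `(q ^ 5; q ^ 5)_∞` in the
two theta products cancel. -/
noncomputable def rrFifth {K : Type*} [Field K] [TopologicalSpace K] (q : K) : K :=
  q * (thetaProd 1 4 q / thetaProd 2 3 q) ^ 5

theorem hasDerivAt_rrFifth {q : ℂ} (hq : ‖q‖ < 1) :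
    HasDerivAt rrFifth (qPochhammer q q ^ 5 / qPochhammer (q ^ 5) (q ^ 5) *
      (thetaProd 1 4 q / thetaProd 2 3 q) ^ 5) q := by
  have hdisc : Metric.ball 0 1 ∈ 𝓝 q := Metric.isOpen_ball.mem_nhds (mem_ball_zero_iff.mpr hq)
  have hA := ((differentiableOn_thetaProd 1 4).differentiableAt hdisc).hasDerivAt
  have hB := ((differentiableOn_thetaProd 2 3).differentiableAt hdisc).hasDerivAt
  have hB0 : thetaProd 2 3 q ≠ 0 := thetaProd_ne_zero two_ne_zero three_ne_zero hq
  have hq5 : ‖q ^ 5‖ < 1 := norm_pow_lt_one hq (by norm_num)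
  have hP0 : qPochhammer (q ^ 5) (q ^ 5) ≠ 0 := qPochhammer_ne_zero hq5 hq5
  refine ((hasDerivAt_id q).mul ((hA.div hB hB0).pow 5)).congr_deriv ?_
  have hwronskian := wronskian_thetaProd_eq_qPochhammer_pow hq
  rw [wronskian] at hwronskian
  have hsix : qPochhammer q q ^ 6 = qPochhammer q q ^ 5 / qPochhammer (q ^ 5) (q ^ 5) *
      (thetaProd 1 4 q * thetaProd 2 3 q) := by
    rw [thetaProd_one_four_mul_thetaProd_two_three hq]
    field_simp
  rw [hsix] at hwronskian
  generalize qPochhammer q q ^ 5 / qPochhammer (q ^ 5) (q ^ 5) = c at *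
  simp only [Pi.div_apply, Pi.pow_apply, id, Nat.cast_ofNat, Nat.add_one_sub_one]
  field_simp
  linear_combination thetaProd 1 4 q ^ 4 * hwronskian

/-- Ramanujan's identity `1 / r⁵ - 11 - r⁵ = E(q)⁶ / (q E(q⁵)⁶)`, with denominators cleared. -/
theorem mul_one_sub_eleven_mul_rrFifth_sub_sq {q : ℂ} (hq : ‖q‖ < 1) :
    q * qPochhammer (q ^ 5) (q ^ 5) ^ 6 * (1 - 11 * rrFifth q - rrFifth q ^ 2) =
      rrFifth q * qPochhammer q q ^ 6 := by
  have hA0 : thetaProd 1 4 q ≠ 0 := thetaProd_ne_zero one_ne_zero four_ne_zero hq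
  have hB0 : thetaProd 2 3 q ≠ 0 := thetaProd_ne_zero two_ne_zero three_ne_zero hq
  have hmul := thetaProd_one_four_mul_thetaProd_two_three hq
  have hklein := kleinForm_thetaProd_eq_qPochhammer_pow hq
  unfold rrFifth
  generalize thetaProd 1 4 q = A at *
  generalize thetaProd 2 3 q = B at *
  generalize qPochhammer q q = E at *
  generalize qPochhammer (q ^ 5) (q ^ 5) = P at *
  have hcancel : P ^ 6 * (B ^ 10 - 11 * q * A ^ 5 * B ^ 5 - q ^ 2 * A ^ 10) =
      A ^ 5 * B ^ 5 * E ^ 6 := by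
    refine mul_left_cancel₀ (mul_ne_zero hA0 hB0) ?_
    calc A * B * (P ^ 6 * (B ^ 10 - 11 * q * A ^ 5 * B ^ 5 - q ^ 2 * A ^ 10))
        = E ^ 6 * (E * P) ^ 6 := by linear_combination P ^ 6 * hklein
      _ = A * B * (A ^ 5 * B ^ 5 * E ^ 6) := by rw [← hmul]; ring
  field_simp
  linear_combination q * hcancel

section Real

variable {q : ℝ}

lemma ofReal_thetaProd {r s : ℕ} (hrs : r + s ≠ 0) (hq : ‖q‖ < 1) :
    ((thetaProd r s q : ℝ) : ℂ) = thetaProd r s (q : ℂ) := by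
  simp only [thetaProd, Complex.ofReal_mul, ofReal_qPochhammer _ (norm_pow_lt_one hq hrs),
    Complex.ofReal_pow]

lemma ofReal_rrFifth (hq : ‖q‖ < 1) : ((rrFifth q : ℝ) : ℂ) = rrFifth (q : ℂ) := by
  simp only [rrFifth, Complex.ofReal_mul, Complex.ofReal_pow, Complex.ofReal_div,
    ofReal_thetaProd _ hq, ne_eq, Nat.reduceAdd, OfNat.ofNat_ne_zero, not_false_eq_true]

lemma norm_lt_one_of_nonneg_of_lt_one (h0 : 0 ≤ q) (h1 : q < 1) : ‖q‖ < 1 := by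
  rwa [Real.norm_of_nonneg h0]

lemma eulerE_eq_qPochhammer (q : ℝ) : eulerE q = qPochhammer q q := by
  simp only [eulerE, qPochhammer, pow_succ']

lemma eulerE_pos (hq : ‖q‖ < 1) : 0 < eulerE q := by
  rw [eulerE_eq_qPochhammer]
  exact qPochhammer_pos hq hq

lemma ofReal_eulerE (hq : ‖q‖ < 1) : (eulerE q : ℂ) = qPochhammer (q : ℂ) q := by
  rw [eulerE_eq_qPochhammer, ofReal_qPochhammer q hq]

lemma rrProd_pow_five (h0 : 0 ≤ q) (h1 : q < 1) : rrProd q ^ 5 = rrFifth q := by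
  have hpow {n : ℕ} (hn : n ≠ 0) : ‖q ^ n‖ < 1 :=
    norm_pow_lt_one (norm_lt_one_of_nonneg_of_lt_one h0 h1) hn
  have hne {n : ℕ} (hn : n ≠ 0) : qPochhammer (q ^ n) (q ^ 5) ≠ 0 :=
    qPochhammer_ne_zero (hpow hn) (hpow (by norm_num))
  have hprod (n : ℕ) :
      HasProd (fun j : ℕ => 1 - q ^ (5 * j + n)) (qPochhammer (q ^ n) (q ^ 5)) := by
    refine (multipliable_one_sub_mul_pow (q ^ n) (hpow (by norm_num))).hasProd.congr_fun ?_
    intro j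
    ring
  have hquot := ((hprod 1).mul (hprod 4)).div₀ ((hprod 2).mul (hprod 3))
    (mul_ne_zero (hne two_ne_zero) (hne three_ne_zero))
  have hroot : (q ^ ((1 : ℝ) / 5)) ^ 5 = q := by
    rw [← Real.rpow_natCast, ← Real.rpow_mul h0]
    norm_num
  rw [rrProd, hquot.tprod_eq, mul_pow, hroot, rrFifth, thetaProd, thetaProd,
    mul_div_mul_left _ _ (hne (by norm_num))]

lemma hasDerivAt_rrFifth_real (h0 : 0 < q) (h1 : q < 1) :
    HasDerivAt rrFifth (eulerE q ^ 5 / eulerE (q ^ 5) * rrProd q ^ 5 / q) q := by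
  have hq := norm_lt_one_of_nonneg_of_lt_one h0.le h1
  have hq5 : ‖q ^ 5‖ < 1 := norm_pow_lt_one hq (by norm_num)
  have hvalue : qPochhammer (q : ℂ) q ^ 5 / qPochhammer ((q : ℂ) ^ 5) ((q : ℂ) ^ 5) *
      (thetaProd 1 4 (q : ℂ) / thetaProd 2 3 (q : ℂ)) ^ 5 =
      ((eulerE q ^ 5 / eulerE (q ^ 5) * rrProd q ^ 5 / q : ℝ) : ℂ) := by
    rw [← Complex.ofReal_pow, ← ofReal_eulerE hq, ← ofReal_eulerE hq5,
      ← ofReal_thetaProd (by norm_num) hq, ← ofReal_thetaProd (by norm_num) hq,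
      rrProd_pow_five h0.le h1, rrFifth, mul_div_assoc, mul_div_cancel_left₀ _ h0.ne']
    push_cast
    rfl
  have hcomplex : HasDerivAt (rrFifth : ℂ → ℂ)
      ((eulerE q ^ 5 / eulerE (q ^ 5) * rrProd q ^ 5 / q : ℝ) : ℂ) q := by
    rw [← hvalue]
    exact hasDerivAt_rrFifth (by simpa using hq)
  refine hcomplex.real_of_complex.congr_of_eventuallyEq ?_
  filter_upwards [Ioo_mem_nhds h0 h1] with t ht
  rw [← ofReal_rrFifth (norm_lt_one_of_nonneg_of_lt_one ht.1.le ht.2), Complex.ofReal_re]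

lemma rrFifth_pos (h0 : 0 < q) (h1 : q < 1) : 0 < rrFifth q := by
  have hpow {n : ℕ} (hn : n ≠ 0) : ‖q ^ n‖ < 1 :=
    norm_pow_lt_one (norm_lt_one_of_nonneg_of_lt_one h0.le h1) hn
  have hpos {n : ℕ} (hn : n ≠ 0) : 0 < qPochhammer (q ^ n) (q ^ 5) :=
    qPochhammer_pos (hpow hn) (hpow (by norm_num))
  have htheta {r s : ℕ} (hr : r ≠ 0) (hs : s ≠ 0) (hrs : r + s = 5) : 0 < thetaProd r s q := by
    rw [thetaProd, hrs]
    exact mul_pos (hpos (by norm_num)) (mul_pos (hpos hr) (hpos hs))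
  exact mul_pos h0 (pow_pos (div_pos (htheta one_ne_zero four_ne_zero rfl)
    (htheta two_ne_zero three_ne_zero rfl)) 5)

lemma continuousOn_rrFifth_Ico : ContinuousOn (rrFifth : ℝ → ℝ) (Set.Ico 0 1) := by
  have hnorm {t : ℝ} (ht : t ∈ Set.Ico (0 : ℝ) 1) : ‖t‖ < 1 :=
    norm_lt_one_of_nonneg_of_lt_one ht.1 ht.2
  have hre : ContinuousOn (fun t : ℝ => (rrFifth (t : ℂ)).re) (Set.Ico 0 1) := fun t ht =>
    (hasDerivAt_rrFifth (by simpa using hnorm ht)).real_of_complex.continuousAt.continuousWithinAt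
  exact hre.congr fun t ht =>
    (Complex.ofReal_re _).symm.trans (congrArg Complex.re (ofReal_rrFifth (hnorm ht)))

theorem integral_eulerE_mul_rrProd (h0 : 0 < q) (h1 : q < 1) :
    ∫ t in (0 : ℝ)..q, eulerE t ^ 5 / eulerE (t ^ 5) * rrProd t ^ 5 / t = rrProd q ^ 5 := by
  have hcont : ContinuousOn rrFifth (Set.Icc 0 q) :=
    continuousOn_rrFifth_Ico.mono fun t ht => ⟨ht.1, ht.2.trans_lt h1⟩
  have hderiv (t : ℝ) (ht : t ∈ Set.Ioo 0 q) :
      HasDerivAt rrFifth (eulerE t ^ 5 / eulerE (t ^ 5) * rrProd t ^ 5 / t) t :=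
    hasDerivAt_rrFifth_real ht.1 (ht.2.trans h1)
  have hnonneg (t : ℝ) (ht : t ∈ Set.Ioo 0 q) :
      0 ≤ eulerE t ^ 5 / eulerE (t ^ 5) * rrProd t ^ 5 / t := by
    obtain ⟨ht0, ht1⟩ : 0 < t ∧ t < 1 := ⟨ht.1, ht.2.trans h1⟩
    have hnorm := norm_lt_one_of_nonneg_of_lt_one ht0.le ht1
    have hE := eulerE_pos hnorm
    have hE5 := eulerE_pos (norm_pow_lt_one hnorm (n := 5) (by norm_num))
    have hR := rrFifth_pos ht0 ht1
    rw [rrProd_pow_five ht0.le ht1]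
    positivity
  have hint := intervalIntegral.integrableOn_deriv_of_nonneg hcont hderiv hnonneg
  rw [intervalIntegral.integral_eq_sub_of_hasDerivAt_of_le h0.le hcont hderiv
    ((intervalIntegrable_iff_integrableOn_Ioc_of_le h0.le).mpr hint), rrProd_pow_five h0.le h1]
  simp [rrFifth]

/-- The transformation of `η²` under `τ ↦ -1 / τ` at `τ = i / x`. -/
lemma mul_sq_exp_mul_eulerE_exp {x : ℝ} (hx : 0 < x) :
    x * (rexp (-2 * π * x / 24) * eulerE (rexp (-2 * π * x))) ^ 2 =
      (rexp (-2 * π / x / 24) * eulerE (rexp (-2 * π / x))) ^ 2 := by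
  have hnorm {y : ℝ} (hy : 0 < y) : ‖rexp (-2 * π * y)‖ < 1 := by
    refine norm_lt_one_of_nonneg_of_lt_one (exp_pos _).le (exp_lt_one_iff.mpr ?_)
    nlinarith [mul_pos pi_pos hy]
  have heta {y : ℝ} (hy : 0 < y) : ModularForm.eta (Complex.I * y) =
      ((rexp (-2 * π * y / 24) * eulerE (rexp (-2 * π * y)) : ℝ) : ℂ) := by
    have hexp (z : ℂ) : 2 * π * Complex.I * (Complex.I * z) = -2 * π * z := by
      linear_combination 2 * π * z * Complex.I_sq
    rw [eta_eq_qPochhammer, mul_div_assoc, hexp, hexp, Complex.ofReal_mul, ofReal_eulerE (hnorm hy)]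
    push_cast
    rw [mul_div_assoc]
  have him : 0 < (Complex.I * (x⁻¹ : ℝ)).im := by simpa using hx
  have hS := eta_neg_one_div_sq ⟨_, him⟩
  have hneg : -1 / (Complex.I * (x⁻¹ : ℝ)) = Complex.I * x := by
    have hI := Complex.I_ne_zero
    have hx0 : (x : ℂ) ≠ 0 := by exact_mod_cast hx.ne'
    push_cast
    field_simp
    rw [Complex.I_sq]
  have hfactor : -Complex.I * (Complex.I * (x⁻¹ : ℝ)) = ((x⁻¹ : ℝ) : ℂ) := by
    linear_combination -((x⁻¹ : ℝ) : ℂ) * Complex.I_sq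
  rw [UpperHalfPlane.coe_mk, hneg, hfactor, heta hx, heta (inv_pos.mpr hx)] at hS
  have hreal : (rexp (-2 * π * x / 24) * eulerE (rexp (-2 * π * x))) ^ 2 =
      x⁻¹ * (rexp (-2 * π * x⁻¹ / 24) * eulerE (rexp (-2 * π * x⁻¹))) ^ 2 := by
    exact_mod_cast hS
  rw [hreal, mul_inv_cancel_left₀ hx.ne']
  rfl

lemma eulerE_exp_neg_two_pi_div_sqrt_five_pow_six :
    eulerE (rexp (-2 * π / √5)) ^ 6 = 5 * √5 * rexp (-2 * π / √5) *
      eulerE (rexp (-2 * π / √5) ^ 5) ^ 6 := by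
  have hs : √5 ^ 2 = 5 := Real.sq_sqrt (by norm_num)
  have hs0 : √5 ≠ 0 := by positivity
  have hexp5 (a : ℝ) : rexp (-2 * π * √5 / a) = rexp (-2 * π / √5 / a) ^ 5 := by
    rw [← Real.exp_nat_mul]
    congr 1
    field_simp
    rw [hs]
    norm_num
  have hexp24 : rexp (-2 * π / √5) = rexp (-2 * π / √5 / 24) ^ 24 := by
    rw [← Real.exp_nat_mul]
    congr 1
    ring
  have heta := mul_sq_exp_mul_eulerE_exp (x := √5) (by positivity)
  rw [hexp5, ← div_one (-2 * π * √5), hexp5, div_one] at heta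
  generalize eulerE (rexp (-2 * π / √5)) = E at *
  generalize eulerE (rexp (-2 * π / √5) ^ 5) = P at *
  rw [hexp24]
  have hu : rexp (-2 * π / √5 / 24) ≠ 0 := exp_ne_zero _
  generalize rexp (-2 * π / √5 / 24) = u at *
  have hsq : E ^ 2 = √5 * u ^ 8 * P ^ 2 := by
    refine mul_left_cancel₀ (pow_ne_zero 2 hu) ?_
    linear_combination -heta
  calc E ^ 6 = (√5 * u ^ 8 * P ^ 2) ^ 3 := by rw [← hsq]; ring
    _ = 5 * √5 * u ^ 24 * P ^ 6 := by linear_combination √5 * u ^ 24 * P ^ 6 * hs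

lemma one_sub_eleven_mul_rrFifth_sub_sq (h0 : 0 < q) (h1 : q < 1) {c : ℝ}
    (hc : eulerE q ^ 6 = c * q * eulerE (q ^ 5) ^ 6) :
    1 - 11 * rrFifth q - rrFifth q ^ 2 = c * rrFifth q := by
  have hq := norm_lt_one_of_nonneg_of_lt_one h0.le h1
  have hq5 : ‖q ^ 5‖ < 1 := norm_pow_lt_one hq (by norm_num)
  have hquad : q * eulerE (q ^ 5) ^ 6 * (1 - 11 * rrFifth q - rrFifth q ^ 2) =
      rrFifth q * eulerE q ^ 6 := by
    have h := mul_one_sub_eleven_mul_rrFifth_sub_sq (q := (q : ℂ)) (by simpa using hq)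
    rw [← Complex.ofReal_pow, ← ofReal_eulerE hq, ← ofReal_eulerE hq5, ← ofReal_rrFifth hq] at h
    exact_mod_cast h
  refine mul_left_cancel₀ (mul_pos h0 (pow_pos (eulerE_pos hq5) 6)).ne' ?_
  rw [hquad, hc]
  ring

lemma half_one_add_sqrt_five_pow_five : ((1 + √5) / 2) ^ 5 = (11 + 5 * √5) / 2 := by
  have hs : √5 ^ 2 = 5 := Real.sq_sqrt (by norm_num)
  linear_combination (√5 ^ 3 + 5 * √5 ^ 2 + 15 * √5 + 35) / 32 * hs

theorem rrProd_exp_neg_two_pi_div_sqrt_five_pow_five :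
    rrProd (rexp (-2 * π / √5)) ^ 5 = √(((1 + √5) / 2) ^ 10 + 1) - ((1 + √5) / 2) ^ 5 := by
  have h0 : 0 < rexp (-2 * π / √5) := exp_pos _
  have h1 : rexp (-2 * π / √5) < 1 :=
    exp_lt_one_iff.mpr (div_neg_of_neg_of_pos (by linarith [pi_pos]) (by positivity))
  have hquad := one_sub_eleven_mul_rrFifth_sub_sq h0 h1 eulerE_exp_neg_two_pi_div_sqrt_five_pow_six
  have hpos := rrFifth_pos h0 h1
  rw [rrProd_pow_five h0.le h1]
  generalize rrFifth (rexp (-2 * π / √5)) = R at *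
  have hsq : ((1 + √5) / 2) ^ 10 + 1 = (R + ((1 + √5) / 2) ^ 5) ^ 2 := by
    rw [show 10 = 5 * 2 by norm_num, pow_mul, half_one_add_sqrt_five_pow_five]
    linear_combination hquad
  rw [hsq, Real.sqrt_sq (by positivity), add_sub_cancel_right]

end Real

end RogersRamanujan

theorem stmt_0 :
    (∀ q : ℝ, 0 < q → q < 1 →
      (∫ t in (0:ℝ)..q, (eulerE t) ^ 5 / eulerE (t ^ 5) * (rrProd t) ^ 5 / t)
        = (rrProd q) ^ 5) ∧
    (rrProd (Real.exp (-2 * Real.pi / Real.sqrt 5))) ^ 5 =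
      Real.sqrt (((1 + Real.sqrt 5) / 2) ^ 10 + 1) - ((1 + Real.sqrt 5) / 2) ^ 5 :=
  ⟨fun _ h0 h1 => integral_eulerE_mul_rrProd h0 h1, rrProd_exp_neg_two_pi_div_sqrt_five_pow_five⟩
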